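/- Let k ≥ 1 and let m₁,…,m_k and n₁,…,n_k be positive integers. On the product E = ∏_{i=1}^k ℝ^{m_i}, the formula D((x_i)_i, (y_i)_i) = max_{1 ≤ i ≤ k} ‖x_i − y_i‖^{1/n_i} (Euclidean norms on each factor) defines a metric, and the Hausdorff dimension of the metric space (E, D) equals Σ_{i=1}^k n_i · m_i. -/

import Mathlib

open MeasureTheory ENNReal

lemma D_le_iff {k : ℕ} (hk : 1 ≤ k) {m n : Fin k → ℕ} (hn : ∀ i, 0 < n i)
    (x y : ∀ i : Fin k, EuclideanSpace ℝ (Fin (m i))) (r : ℝ) (hr : 0 ≤ r) :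
    (⨆ i : Fin k, ‖x i - y i‖ ^ ((n i : ℝ)⁻¹)) ≤ r ↔ ∀ i, ‖x i - y i‖ ≤ r ^ (n i) := by
  have : Nonempty (Fin k) := ⟨⟨0, hk⟩⟩
  rw [ciSup_le_iff (Set.finite_range _).bddAbove]
  refine forall_congr' fun i => ?_
  have : (0:ℝ) < n i := by exact_mod_cast hn i
  rw [Real.rpow_inv_le_iff_of_pos (norm_nonneg _) hr this, Real.rpow_natCast]

lemma lower_bound {k : ℕ} {m n : Fin k → ℕ} {X : Type} [MetricSpace X]
    (e : X ≃ ∀ i : Fin k, EuclideanSpace ℝ (Fin (m i)))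
    (H : ∀ x y r, 0 ≤ r → (dist x y ≤ r ↔ ∀ i, ‖e x i - e y i‖ ≤ r ^ (n i))) :
    ((∑ i, n i * m i : ℕ) : ℝ≥0∞) ≤ dimH (Set.univ : Set X) := by
  borelize X
  set Q : ℕ := ∑ i, n i * m i with hQ
  let c : ℝ≥0∞ := ∏ i, volume (Metric.ball (0 : EuclideanSpace ℝ (Fin (m i))) 1)
  have hc0 : c ≠ 0 := by
    refine Finset.prod_ne_zero_iff.2 fun i _ => ?_
    exact (Metric.measure_ball_pos _ _ one_pos).ne'
  have hct : c ≠ ∞ := ENNReal.prod_ne_top fun i _ => measure_ball_lt_top.ne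
  let ν : OuterMeasure X := c⁻¹ • OuterMeasure.comap e
    (volume : Measure (∀ i : Fin k, EuclideanSpace ℝ (Fin (m i)))).toOuterMeasure
  have hν : ∀ s, ν s = c⁻¹ * volume (e '' s) := fun s => rfl
  have key : ν ≤ OuterMeasure.mkMetric (fun r => r ^ (Q : ℝ)) := by
    refine OuterMeasure.le_mkMetric _ ν 1 one_pos fun s hs => ?_
    rcases s.eq_empty_or_nonempty with rfl | ⟨x, hx⟩
    · simp
    have hfin : Metric.ediam s ≠ ∞ := (hs.trans_lt one_lt_top).ne
    set d := Metric.diam s with hd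
    have hd0 : 0 ≤ d := Metric.diam_nonneg
    have hsub : e '' s ⊆ Set.univ.pi fun i => Metric.closedBall (e x i) (d ^ n i) := by
      rintro _ ⟨y, hy, rfl⟩ i -
      rw [mem_closedBall_iff_norm]
      exact (H y x d hd0).1 (Metric.dist_le_diam_of_mem' hfin hy hx) i
    have hvol : volume (e '' s) ≤ c * ENNReal.ofReal d ^ Q := by
      refine (measure_mono hsub).trans ?_
      rw [volume_pi_pi]
      refine le_of_eq ?_
      rw [hQ, ← Finset.prod_pow_eq_pow_sum, mul_comm, ← Finset.prod_mul_distrib]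
      refine Finset.prod_congr rfl fun i _ => ?_
      rw [Measure.addHaar_closedBall _ _ (by positivity), finrank_euclideanSpace_fin, ← pow_mul,
        ENNReal.ofReal_pow hd0]
    rw [hν]
    have : Metric.ediam s = ENNReal.ofReal d := (ENNReal.ofReal_toReal hfin).symm
    rw [this, ENNReal.rpow_natCast]
    calc _ ≤ c⁻¹ * (c * ENNReal.ofReal d ^ Q) := by gcongr
      _ = _ := by rw [← mul_assoc, ENNReal.inv_mul_cancel hc0 hct, one_mul]
  have h1 : Measure.hausdorffMeasure (Q : ℝ) (Set.univ : Set X) ≠ 0 := by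
    intro h0
    have h2 := key Set.univ
    rw [OuterMeasure.coe_mkMetric] at h2
    have h3 : ν Set.univ = 0 := le_antisymm (h2.trans h0.le) zero_le
    rw [hν, Set.image_univ, e.range_eq_univ, mul_eq_zero] at h3
    rcases h3 with h3 | h3
    · exact hct (ENNReal.inv_eq_zero.1 h3)
    · exact NeZero.ne _ (Measure.measure_univ_eq_zero.1 h3)
  have := le_dimH_of_hausdorffMeasure_ne_zero (d := (Q : NNReal)) (s := (Set.univ : Set X))
    (by simpa using h1)
  simpa using this

lemma norm_le_of_coord {a : ℕ} (v : EuclideanSpace ℝ (Fin a)) (t : ℝ) 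
    (h : ∀ j, |v j| ≤ t) : ‖v‖ ≤ a * t := by
  have : ‖v‖ ≤ ∑ j, ‖EuclideanSpace.single j (v j)‖ := by
    refine le_trans (le_of_eq ?_) (norm_sum_le _ _)
    congr 1
    ext j
    simp [Finset.sum_apply]
  refine this.trans ?_
  calc _ ≤ ∑ j : Fin a, t := Finset.sum_le_sum fun j _ => by simpa using h j
    _ = _ := by simp

lemma upper_bound {k : ℕ} {m n : Fin k → ℕ} (hn : ∀ i, 0 < n i) {X : Type} [MetricSpace X]
    (e : X ≃ ∀ i : Fin k, EuclideanSpace ℝ (Fin (m i)))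
    (H : ∀ x y r, 0 ≤ r → (dist x y ≤ r ↔ ∀ i, ‖e x i - e y i‖ ≤ r ^ (n i))) :
    dimH (Set.univ : Set X) ≤ ((∑ i, n i * m i : ℕ) : ℝ≥0∞) := by
  borelize X
  set Q : ℕ := ∑ i, n i * m i with hQ
  let cube : (∀ i : Fin k, Fin (m i) → ℤ) → Set X := fun z =>
    {x | ∀ i j, (z i j : ℝ) ≤ e x i j ∧ e x i j < z i j + 1}
  have hcov : (Set.univ : Set X) = ⋃ z, cube z := by
    refine (Set.eq_univ_of_forall fun x => Set.mem_iUnion.2 ⟨fun i j => ⌊e x i j⌋, fun i j => ?_⟩).symm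
    exact ⟨Int.floor_le _, Int.lt_floor_add_one _⟩
  rw [hcov, dimH_iUnion]
  refine iSup_le fun z => ?_
  let C : ℕ := ∑ i, m i
  have hC : ∀ i, m i ≤ C := fun i => Finset.single_le_sum (f := m) (fun _ _ => Nat.zero_le _) (Finset.mem_univ i)
  let t : ∀ N : ℕ, (∀ i : Fin k, Fin (m i) → Fin ((N+1) ^ n i)) → Set X := fun N w =>
    {x | ∀ i j, (z i j : ℝ) + (w i j : ℕ) / ((N:ℝ)+1) ^ n i ≤ e x i j ∧
      e x i j ≤ z i j + ((w i j : ℕ) + 1) / ((N:ℝ)+1) ^ n i}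
  have hdiam : ∀ N w, Metric.ediam (t N w) ≤ ENNReal.ofReal ((C : ℝ) / ((N:ℝ)+1)) := by
    intro N w
    refine Metric.ediam_le fun x hx y hy => ?_
    rw [edist_dist]
    refine ENNReal.ofReal_le_ofReal ?_
    rw [H _ _ _ (by positivity)]
    intro i
    have h1 : ‖e x i - e y i‖ ≤ m i * (1 / ((N:ℝ)+1) ^ n i) := by
      refine norm_le_of_coord _ _ fun j => ?_
      have hx' := hx i j
      have hy' := hy i j
      rw [add_div] at hx' hy'
      rw [PiLp.sub_apply, abs_le]
      constructor <;> linarith [hx'.1, hx'.2, hy'.1, hy'.2]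
    refine h1.trans ?_
    rw [div_pow, mul_one_div]
    gcongr
    have : m i ≤ C ^ n i := (hC i).trans (Nat.le_self_pow (hn i).ne' C)
    exact_mod_cast this
  have hcover : ∀ N, cube z ⊆ ⋃ w, t N w := by
    intro N x hx
    have hp : ∀ i, (0:ℝ) < ((N:ℝ)+1) ^ n i := fun i => by positivity
    have h0 : ∀ i j, 0 ≤ (e x i j - z i j) * ((N:ℝ)+1) ^ n i := fun i j =>
      mul_nonneg (by linarith [(hx i j).1]) (hp i).le
    have h1 : ∀ i j, (e x i j - z i j) * ((N:ℝ)+1) ^ n i < ((N:ℝ)+1) ^ n i := fun i j => by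
      have := (hx i j).2
      nlinarith [hp i]
    refine Set.mem_iUnion.2 ⟨fun i j => ⟨⌊(e x i j - z i j) * ((N:ℝ)+1) ^ n i⌋₊, ?_⟩, fun i j => ?_⟩
    · rw [Nat.floor_lt (h0 i j)]
      push_cast
      exact h1 i j
    · have a := Nat.floor_le (h0 i j)
      have b := (Nat.lt_floor_add_one ((e x i j - z i j) * ((N:ℝ)+1) ^ n i)).le
      rw [← div_le_iff₀ (hp i)] at *
      rw [← le_div_iff₀ (hp i)] at b
      dsimp only
      constructor <;> linarith
  have hlim : Filter.Tendsto (fun N : ℕ => ENNReal.ofReal ((C : ℝ) / ((N:ℝ)+1))) Filter.atTop (nhds 0) := by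
    rw [← ENNReal.ofReal_zero]
    refine ENNReal.tendsto_ofReal ?_
    exact (tendsto_natCast_atTop_atTop.atTop_add tendsto_const_nhds).const_div_atTop _
  have hH := Measure.hausdorffMeasure_le_liminf_sum (Q : ℝ) (cube z)
    _ hlim t (Filter.Eventually.of_forall hdiam) (Filter.Eventually.of_forall hcover)
  have hb : ∀ N : ℕ, ∑ w, Metric.ediam (t N w) ^ (Q : ℝ) ≤ (C : ℝ≥0∞) ^ Q := by
    intro N
    calc _ ≤ ∑ w : (∀ i : Fin k, Fin (m i) → Fin ((N+1) ^ n i)), ENNReal.ofReal ((C : ℝ) / ((N:ℝ)+1)) ^ Q := by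
            refine Finset.sum_le_sum fun w _ => ?_
            rw [ENNReal.rpow_natCast]
            gcongr
            exact hdiam N w
      _ = ((N + 1 : ℕ) : ℝ≥0∞) ^ Q * ENNReal.ofReal ((C : ℝ) / ((N:ℝ)+1)) ^ Q := by
            rw [Finset.sum_const, nsmul_eq_mul, Finset.card_univ]
            congr 1
            simp only [Fintype.card_pi, Fintype.card_fin, Finset.prod_const, Finset.card_univ, ← pow_mul]
            rw [Finset.prod_pow_eq_pow_sum]
            push_cast
            rfl
      _ = (C : ℝ≥0∞) ^ Q := by
            rw [← mul_pow, ← ENNReal.ofReal_natCast (N+1), ← ENNReal.ofReal_mul (by positivity)]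
            push_cast
            rw [mul_div_cancel₀ _ (by positivity), ENNReal.ofReal_natCast]
  have hfin : Measure.hausdorffMeasure (Q : ℝ) (cube z) ≠ ∞ := by
    refine ((hH.trans ?_).trans_lt (ENNReal.pow_lt_top (ENNReal.natCast_lt_top C) (n := Q))).ne
    exact (Filter.liminf_le_liminf (Filter.Eventually.of_forall hb)).trans (by simp)
  have := dimH_le_of_hausdorffMeasure_ne_top (d := (Q : NNReal)) (s := cube z)
    (by simpa using hfin)
  simpa using this

theorem hausdorff_dimension_of_snowflake_product
    (k : ℕ) (hk : 1 ≤ k) (m n : Fin k → ℕ)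
    (hm : ∀ i, 0 < m i) (hn : ∀ i, 0 < n i)
    (D : (∀ i : Fin k, EuclideanSpace ℝ (Fin (m i))) →
      (∀ i : Fin k, EuclideanSpace ℝ (Fin (m i))) → ℝ)
    (hD : ∀ x y, D x y = ⨆ i : Fin k, ‖x i - y i‖ ^ ((n i : ℝ)⁻¹)) :
    (∀ x y, D x y = 0 ↔ x = y) ∧
    (∀ x y, D x y = D y x) ∧
    (∀ x y z, D x z ≤ D x y + D y z) ∧
    ∃ inst : MetricSpace (∀ i : Fin k, EuclideanSpace ℝ (Fin (m i))),
      (∀ x y, @dist _ inst.toDist x y = D x y) ∧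
      @dimH _ (@MetricSpace.toEMetricSpace _ inst) Set.univ
        = ∑ i : Fin k, ((n i : ℝ≥0∞) * (m i : ℝ≥0∞)) := by
  have H : ∀ x y r, 0 ≤ r → (D x y ≤ r ↔ ∀ i, ‖x i - y i‖ ≤ r ^ (n i)) := fun x y r hr => by
    rw [hD]; exact D_le_iff hk hn x y r hr
  have hnn : ∀ x y, 0 ≤ D x y := fun x y => by
    rw [hD]; exact Real.iSup_nonneg fun i => by positivity
  have h0 : ∀ x y, D x y = 0 ↔ x = y := fun x y => by
    rw [← (hnn x y).ge_iff_eq', H x y 0 le_rfl, funext_iff]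
    refine forall_congr' fun i => ?_
    rw [zero_pow (hn i).ne', norm_le_zero_iff, sub_eq_zero]
  have hs : ∀ x y, D x y = D y x := fun x y => by
    simp only [hD, norm_sub_rev]
  have ht : ∀ x y z, D x z ≤ D x y + D y z := fun x y z => by
    rw [H _ _ _ (add_nonneg (hnn _ _) (hnn _ _))]
    intro i
    have h1 := (H x y _ (hnn x y)).1 le_rfl i
    have h2 := (H y z _ (hnn y z)).1 le_rfl i
    calc _ ≤ ‖x i - y i‖ + ‖y i - z i‖ := norm_sub_le_norm_sub_add_norm_sub _ _ _
      _ ≤ D x y ^ n i + D y z ^ n i := add_le_add h1 h2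
      _ ≤ _ := pow_add_pow_le (hnn _ _) (hnn _ _) (hn i).ne'
  refine ⟨h0, hs, ht, ?_⟩
  let inst : MetricSpace (∀ i : Fin k, EuclideanSpace ℝ (Fin (m i))) :=
    { dist := D
      dist_self := fun x => (h0 x x).2 rfl
      dist_comm := hs
      dist_triangle := ht
      eq_of_dist_eq_zero := fun {x y} h => (h0 x y).1 h }
  refine ⟨inst, fun x y => rfl, ?_⟩
  have hQ : ∑ i : Fin k, ((n i : ℝ≥0∞) * (m i : ℝ≥0∞)) = ((∑ i, n i * m i : ℕ) : ℝ≥0∞) := by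
    push_cast; rfl
  rw [hQ]
  exact le_antisymm (@upper_bound k m n hn _ inst (Equiv.refl _) H)
    (@lower_bound k m n _ inst (Equiv.refl _) H)
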